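/- Let {T_t, t ≥ 0} be the compact semigroup on H generated by −A, and for f ∈ L¹([0,T],H) define Rf(t) = ∫_0^t T_{t−s} f(s) ds. If D ⊂ L¹([0,T],H) is uniformly integrable, then the image family Y = R(D) is relatively compact in C([0,T],H). -/

import Mathlib

/-!
Write `R f t = ∫₀ᵗ S (t - s) (f s) ds` and let `M` bound `‖S t‖` on `[0, T]` (uniform boundedness
principle). The semigroup law gives, for `0 ≤ a ≤ t ≤ T`,
`R f t = S (t - a) (R f a) + ∫ₐᵗ S (t - s) (f s) ds` (`conv_split`), and the last integral is at most
`M ∫ₐᵗ ‖f‖`, which uniform integrability makes small, uniformly in `f ∈ 𝒟`, once `t - a` is small.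

* Taking `a = t - h` with `h` fixed, all values `R f t` lie within a small distance of the image
  under the compact operator `S h` of a fixed ball. Hence the set of all values is totally bounded
  (`totallyBounded_values`).
* On a compact set containing all values, `S h x → x` as `h → 0⁺` uniformly in `x`, because
  `(h, x) ↦ S h x` is jointly continuous. With `h = t - a` the same identity thus gives uniform
  equicontinuity of the family (`equicontinuous_values`).

The Arzelà–Ascoli theorem concludes. Norm continuity of the semigroup is not needed.
-/

open MeasureTheory

noncomputable section

section Helpers

variable {H : Type} [NormedAddCommGroup H]

/-- Uniform integrability, as absolute continuity of the integrals, restricted to intervals. -/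
lemma ui_interval {T : ℝ} {𝒟 : Set (ℝ → H)}
    (h𝒟ui : ∀ ε : ℝ, 0 < ε → ∃ δ : ℝ, 0 < δ ∧ ∀ f ∈ 𝒟, ∀ I : Set ℝ,
      MeasurableSet I → I ⊆ Set.Icc 0 T → volume I ≤ ENNReal.ofReal δ →
      (∫ s in I, ‖f s‖) ≤ ε) (ε : ℝ) (hε : 0 < ε) :
    ∃ δ : ℝ, 0 < δ ∧ ∀ f ∈ 𝒟, ∀ a t : ℝ, 0 ≤ a → t ≤ T → t - a ≤ δ →
      (∫ s in Set.Ioc a t, ‖f s‖) ≤ ε := by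
  obtain ⟨δ, hδ, h⟩ := h𝒟ui ε hε
  refine ⟨δ, hδ, fun f hf a t ha ht hat => h f hf _ measurableSet_Ioc ?_ ?_⟩
  · exact fun s hs => ⟨ha.trans hs.1.le, hs.2.trans ht⟩
  · rw [Real.volume_Ioc]
    exact ENNReal.ofReal_le_ofReal hat

/-- A uniformly integrable family on `[0, T]` is bounded in `L¹`, since `[0, T]` is covered by
finitely many short intervals. -/
lemma exists_L1_bound {T : ℝ} {𝒟 : Set (ℝ → H)}
    (h𝒟L1 : ∀ f ∈ 𝒟, Integrable f (volume.restrict (Set.Ioc (0:ℝ) T)))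
    (hui : ∀ ε : ℝ, 0 < ε → ∃ δ : ℝ, 0 < δ ∧ ∀ f ∈ 𝒟, ∀ a t : ℝ, 0 ≤ a → t ≤ T → t - a ≤ δ →
      (∫ s in Set.Ioc a t, ‖f s‖) ≤ ε) :
    ∃ C : ℝ, ∀ f ∈ 𝒟, ∀ t ≤ T, (∫ s in Set.Ioc 0 t, ‖f s‖) ≤ C := by
  obtain ⟨δ, hδ, h⟩ := hui 1 one_pos
  have key : ∀ f ∈ 𝒟, ∀ k : ℕ, ∀ t ≤ T, t ≤ k * δ → (∫ s in Set.Ioc 0 t, ‖f s‖) ≤ k := by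
    intro f hf k
    induction k with
    | zero =>
      intro t _ ht
      rw [Set.Ioc_eq_empty (by simpa using ht)]
      simp
    | succ k ih =>
      intro t htT ht
      push_cast at ht ⊢
      rcases le_or_gt t δ with h1 | h1
      · have := h f hf 0 t le_rfl htT (by linarith)
        have : (0:ℝ) ≤ k := by positivity
        linarith
      · have hint : IntegrableOn (fun s => ‖f s‖) (Set.Ioc 0 T) := (h𝒟L1 f hf).norm
        rw [← Set.Ioc_union_Ioc_eq_Ioc (a := 0) (b := t - δ) (c := t) (by linarith) (by linarith),
          setIntegral_union (Set.Ioc_disjoint_Ioc_of_le le_rfl) measurableSet_Ioc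
          (hint.mono_set (Set.Ioc_subset_Ioc_right (by linarith)))
          (hint.mono_set (Set.Ioc_subset_Ioc (by linarith) htT))]
        have h2 := h f hf (t - δ) t (by linarith) htT (by linarith)
        have h3 := ih (t - δ) (by linarith) (by linarith)
        linarith
  obtain ⟨k, hk⟩ := exists_nat_ge (T / δ)
  rw [div_le_iff₀ hδ] at hk
  exact ⟨k, fun f hf t ht => key f hf k t ht (ht.trans hk)⟩

variable [InnerProductSpace ℝ H]

/-- The convolution `R f t = ∫₀ᵗ S (t - s) (f s) ds`. -/
def conv (S : ℝ → H →L[ℝ] H) (f : ℝ → H) (t : ℝ) : H :=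
  ∫ s in Set.Ioc (0:ℝ) t, (S (t - s)) (f s)

lemma exists_norm_bound [CompleteSpace H] (T : ℝ) (S : ℝ → H →L[ℝ] H)
    (hScont : ∀ x : H, ContinuousOn (fun t => S t x) (Set.Ici (0:ℝ))) :
    ∃ M : ℝ, 0 < M ∧ ∀ t ∈ Set.Icc (0:ℝ) T, ‖S t‖ ≤ M := by
  obtain ⟨C, hC⟩ := banach_steinhaus (g := fun t : Set.Icc (0:ℝ) T => S t) (by
    intro x
    obtain ⟨C, hC⟩ := isCompact_Icc.exists_bound_of_continuousOn
      ((hScont x).mono (fun t (ht : t ∈ Set.Icc (0:ℝ) T) => ht.1))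
    exact ⟨C, fun t => hC t t.2⟩)
  exact ⟨max C 1, by positivity, fun t ht => (hC ⟨t, ht⟩).trans (le_max_left _ _)⟩

/-- The semigroup is jointly continuous on `[0, T] × H`. It is clamped to `[0, T]` in time so as to
be continuous on the whole of `ℝ × H`. -/
lemma continuous_clamp {T M : ℝ} (hT : 0 < T) (hM0 : 0 < M) {S : ℝ → H →L[ℝ] H}
    (hScont : ∀ x : H, ContinuousOn (fun t => S t x) (Set.Ici (0:ℝ)))
    (hM : ∀ t ∈ Set.Icc (0:ℝ) T, ‖S t‖ ≤ M) :
    Continuous (fun p : ℝ × H => S (max 0 (min p.1 T)) p.2) := by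
  refine continuous_prod_of_continuous_lipschitzWith' _ M.toNNReal ?_ ?_
  · intro a
    refine (S (max 0 (min a T))).lipschitz.weaken ?_
    rw [← NNReal.coe_le_coe, Real.coe_toNNReal _ hM0.le]
    exact hM _ ⟨le_max_left _ _, max_le hT.le (min_le_right _ _)⟩
  · intro x
    exact (hScont x).comp_continuous (f := fun t : ℝ => max 0 (min t T)) (by fun_prop)
      (fun t => Set.mem_Ici.2 (le_max_left _ _))

lemma integrable_conv {T M : ℝ} (hT : 0 < T) (hM0 : 0 < M) {S : ℝ → H →L[ℝ] H}
    (hScont : ∀ x : H, ContinuousOn (fun t => S t x) (Set.Ici (0:ℝ)))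
    (hM : ∀ t ∈ Set.Icc (0:ℝ) T, ‖S t‖ ≤ M) {f : ℝ → H}
    (hf : Integrable f (volume.restrict (Set.Ioc (0:ℝ) T)))
    {t : ℝ} (ht : t ∈ Set.Icc (0:ℝ) T) :
    IntegrableOn (fun s => S (t - s) (f s)) (Set.Ioc 0 t) := by
  have hf' : IntegrableOn f (Set.Ioc 0 t) :=
    IntegrableOn.mono_set hf (Set.Ioc_subset_Ioc_right ht.2)
  have hmeas : AEStronglyMeasurable (fun s => S (max 0 (min (t - s) T)) (f s))
      (volume.restrict (Set.Ioc 0 t)) :=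
    (continuous_clamp hT hM0 hScont hM).comp_aestronglyMeasurable
      (g := fun p : ℝ × H => S (max 0 (min p.1 T)) p.2) (f := fun s => (t - s, f s))
      (AEStronglyMeasurable.prodMk (by fun_prop) hf'.aestronglyMeasurable)
  refine Integrable.mono' (g := fun s => M * ‖f s‖) (hf'.norm.const_mul M) ?_ ?_
  · refine hmeas.congr ?_
    filter_upwards [ae_restrict_mem measurableSet_Ioc] with s hs
    rw [min_eq_left (by linarith [hs.1, ht.2]), max_eq_right (by linarith [hs.2])]
  · filter_upwards [ae_restrict_mem measurableSet_Ioc] with s hs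
    exact (S (t - s)).le_of_opNorm_le
      (hM _ ⟨by linarith [hs.2], by linarith [hs.1, ht.2]⟩) _

lemma norm_tail_le {T M : ℝ} {S : ℝ → H →L[ℝ] H}
    (hM : ∀ t ∈ Set.Icc (0:ℝ) T, ‖S t‖ ≤ M) {f : ℝ → H}
    (hf : Integrable f (volume.restrict (Set.Ioc (0:ℝ) T)))
    {a t : ℝ} (ha : 0 ≤ a) (htT : t ≤ T) :
    ‖∫ s in Set.Ioc a t, S (t - s) (f s)‖ ≤ M * ∫ s in Set.Ioc a t, ‖f s‖ := by
  have hf' : IntegrableOn f (Set.Ioc a t) :=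
    IntegrableOn.mono_set hf (Set.Ioc_subset_Ioc ha htT)
  rw [← integral_const_mul]
  refine norm_integral_le_of_norm_le (hf'.norm.const_mul M) ?_
  filter_upwards [ae_restrict_mem measurableSet_Ioc] with s hs
  exact (S (t - s)).le_of_opNorm_le
    (hM _ ⟨by linarith [hs.2], by linarith [hs.1]⟩) _

lemma conv_split [CompleteSpace H] {T M : ℝ} (hT : 0 < T) (hM0 : 0 < M) {S : ℝ → H →L[ℝ] H}
    (hSsemigroup : ∀ s t : ℝ, 0 ≤ s → 0 ≤ t → S (s + t) = (S s).comp (S t))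
    (hScont : ∀ x : H, ContinuousOn (fun t => S t x) (Set.Ici (0:ℝ)))
    (hM : ∀ t ∈ Set.Icc (0:ℝ) T, ‖S t‖ ≤ M) {f : ℝ → H}
    (hf : Integrable f (volume.restrict (Set.Ioc (0:ℝ) T)))
    {a t : ℝ} (ha : 0 ≤ a) (hat : a ≤ t) (htT : t ≤ T) :
    conv S f t = S (t - a) (conv S f a) + ∫ s in Set.Ioc a t, S (t - s) (f s) := by
  have hint := integrable_conv hT hM0 hScont hM hf (t := t) ⟨ha.trans hat, htT⟩
  have hinta := integrable_conv hT hM0 hScont hM hf (t := a) ⟨ha, hat.trans htT⟩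
  unfold conv
  rw [← Set.Ioc_union_Ioc_eq_Ioc ha hat, setIntegral_union (Set.Ioc_disjoint_Ioc_of_le le_rfl)
    measurableSet_Ioc (hint.mono_set (Set.Ioc_subset_Ioc_right hat))
    (hint.mono_set (Set.Ioc_subset_Ioc_left ha)), ← ContinuousLinearMap.integral_comp_comm _ hinta]
  congr 1
  refine setIntegral_congr_fun measurableSet_Ioc fun s hs => ?_
  have := hSsemigroup (t - a) (a - s) (by linarith) (by linarith [hs.2])
  rw [sub_add_sub_cancel] at this
  simp [this]

lemma totallyBounded_values [CompleteSpace H] {T M : ℝ} (hT : 0 < T) (hM0 : 0 < M)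
    {S : ℝ → H →L[ℝ] H}
    (hSsemigroup : ∀ s t : ℝ, 0 ≤ s → 0 ≤ t → S (s + t) = (S s).comp (S t))
    (hScont : ∀ x : H, ContinuousOn (fun t => S t x) (Set.Ici (0:ℝ)))
    (hScompact : ∀ t : ℝ, 0 < t → IsCompactOperator (S t))
    (hM : ∀ t ∈ Set.Icc (0:ℝ) T, ‖S t‖ ≤ M) {𝒟 : Set (ℝ → H)}
    (h𝒟L1 : ∀ f ∈ 𝒟, Integrable f (volume.restrict (Set.Ioc (0:ℝ) T)))
    (hui : ∀ ε : ℝ, 0 < ε → ∃ δ : ℝ, 0 < δ ∧ ∀ f ∈ 𝒟, ∀ a t : ℝ, 0 ≤ a → t ≤ T → t - a ≤ δ →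
      (∫ s in Set.Ioc a t, ‖f s‖) ≤ ε) :
    TotallyBounded {x : H | ∃ f ∈ 𝒟, ∃ t ∈ Set.Icc (0:ℝ) T, conv S f t = x} := by
  obtain ⟨C, hC⟩ := exists_L1_bound h𝒟L1 hui
  rw [Metric.totallyBounded_iff]
  intro ε hε
  obtain ⟨δ, hδ, h⟩ := hui (ε / 2 / M / 2) (by positivity)
  have htb : TotallyBounded (S δ '' Metric.closedBall 0 (M * max C 0)) :=
    ((hScompact δ hδ).isCompact_closure_image_closedBall (f := (S δ).toLinearMap)
      _).totallyBounded.subset subset_closure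
  obtain ⟨F, hF, hFc⟩ := Metric.totallyBounded_iff.1 htb (ε / 2) (by positivity)
  refine ⟨F, hF, ?_⟩
  rintro x ⟨f, hf, t, ht, rfl⟩
  -- Within `ε / 2` of `R f t` there is a point of the totally bounded set: `S δ (R f (t - δ))`
  -- if `t ≥ δ`, and `0` otherwise.
  obtain ⟨y, hy, hxy⟩ : ∃ y ∈ S δ '' Metric.closedBall 0 (M * max C 0),
      dist (conv S f t) y < ε / 2 := by
    have hsmall : M * (ε / 2 / M / 2) < ε / 2 := by
      have : M * (ε / 2 / M / 2) = ε / 4 := by field_simp; norm_num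
      linarith
    rcases le_or_gt δ t with h1 | h1
    · refine ⟨S δ (conv S f (t - δ)), ⟨_, ?_, rfl⟩, ?_⟩
      · rw [mem_closedBall_zero_iff]
        refine (norm_tail_le hM (h𝒟L1 f hf) le_rfl (by linarith [ht.2])).trans ?_
        gcongr
        exact (hC f hf _ (by linarith [ht.2])).trans (le_max_left _ _)
      · rw [conv_split hT hM0 hSsemigroup hScont hM (h𝒟L1 f hf) (a := t - δ) (by linarith)
          (by linarith) ht.2, sub_sub_cancel, dist_eq_norm, add_sub_cancel_left]
        refine lt_of_le_of_lt (norm_tail_le hM (h𝒟L1 f hf) (by linarith) ht.2) ?_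
        refine lt_of_le_of_lt ?_ hsmall
        gcongr
        exact h f hf _ _ (by linarith) ht.2 (by linarith)
    · refine ⟨0, ⟨0, by simp; positivity, map_zero _⟩, ?_⟩
      rw [dist_zero_right]
      refine lt_of_le_of_lt (norm_tail_le hM (h𝒟L1 f hf) le_rfl ht.2) ?_
      refine lt_of_le_of_lt ?_ hsmall
      gcongr
      exact h f hf _ _ le_rfl ht.2 (by linarith)
  obtain ⟨z, hz, hyz⟩ := Set.mem_iUnion₂.1 (hFc hy)
  refine Set.mem_iUnion₂.2 ⟨z, hz, ?_⟩
  rw [Metric.mem_ball] at hyz ⊢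
  linarith [dist_triangle (conv S f t) y z]

lemma equicontinuous_values [CompleteSpace H] {T M : ℝ} (hT : 0 < T) (hM0 : 0 < M)
    {S : ℝ → H →L[ℝ] H}
    (hS0 : S 0 = ContinuousLinearMap.id ℝ H)
    (hSsemigroup : ∀ s t : ℝ, 0 ≤ s → 0 ≤ t → S (s + t) = (S s).comp (S t))
    (hScont : ∀ x : H, ContinuousOn (fun t => S t x) (Set.Ici (0:ℝ)))
    (hM : ∀ t ∈ Set.Icc (0:ℝ) T, ‖S t‖ ≤ M) {𝒟 : Set (ℝ → H)}
    (h𝒟L1 : ∀ f ∈ 𝒟, Integrable f (volume.restrict (Set.Ioc (0:ℝ) T)))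
    (hui : ∀ ε : ℝ, 0 < ε → ∃ δ : ℝ, 0 < δ ∧ ∀ f ∈ 𝒟, ∀ a t : ℝ, 0 ≤ a → t ≤ T → t - a ≤ δ →
      (∫ s in Set.Ioc a t, ‖f s‖) ≤ ε)
    {K : Set H} (hK : IsCompact K)
    (hKmem : ∀ f ∈ 𝒟, ∀ t ∈ Set.Icc (0:ℝ) T, conv S f t ∈ K) (ε : ℝ) (hε : 0 < ε) :
    ∃ δ : ℝ, 0 < δ ∧ ∀ f ∈ 𝒟, ∀ a t : ℝ, 0 ≤ a → a ≤ t → t ≤ T → t - a < δ →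
      dist (conv S f a) (conv S f t) < ε := by
  have huc := (isCompact_Icc (a := (0:ℝ)) (b := T) |>.prod hK).uniformContinuousOn_of_continuous
    (continuous_clamp hT hM0 hScont hM).continuousOn
  obtain ⟨δ₁, hδ₁, h₁⟩ := Metric.uniformContinuousOn_iff.1 huc (ε / 2) (by positivity)
  obtain ⟨δ₂, hδ₂, h₂⟩ := hui (ε / 2 / M) (by positivity)
  refine ⟨min δ₁ δ₂, by positivity, fun f hf a t ha hat htT hlt => ?_⟩
  have hx := hKmem f hf a ⟨ha, hat.trans htT⟩
  have e1 := h₁ (0, conv S f a) ⟨⟨le_rfl, hT.le⟩, hx⟩ (t - a, conv S f a)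
    ⟨⟨by linarith, by linarith⟩, hx⟩ (by
      rw [dist_prod_same_right, dist_comm, Real.dist_eq, sub_zero, abs_of_nonneg (by linarith)]
      exact hlt.trans_le (min_le_left _ _))
  simp only [min_eq_left hT.le, max_self, min_eq_left (show t - a ≤ T by linarith),
    max_eq_right (show 0 ≤ t - a by linarith), hS0, ContinuousLinearMap.id_apply] at e1
  have e2 : ‖∫ s in Set.Ioc a t, S (t - s) (f s)‖ ≤ ε / 2 := by
    refine (norm_tail_le hM (h𝒟L1 f hf) ha htT).trans ?_
    calc M * _ ≤ M * (ε / 2 / M) := by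
          gcongr
          exact h₂ f hf a t ha htT (hlt.le.trans (min_le_right _ _))
      _ = ε / 2 := by field_simp
  have hs := conv_split hT hM0 hSsemigroup hScont hM (h𝒟L1 f hf) ha hat htT
  have e3 : dist (S (t - a) (conv S f a)) (conv S f t) ≤ ε / 2 := by
    rw [hs, dist_self_add_right]
    exact e2
  linarith [dist_triangle (conv S f a) (S (t - a) (conv S f a)) (conv S f t)]

end Helpers

/-- Let `{T_t, t ≥ 0}` be the compact `C₀`-semigroup on `H`
generated by `−A` (the Stokes operator), and for `f ∈ L¹([0,T],H)` define
`Rf(t) = ∫₀ᵗ T_{t−s} f(s) ds`.  If `𝒟 ⊆ L¹([0,T],H)` is uniformly integrable,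
then the image family `𝒴 = R(𝒟)` is relatively compact in `C([0,T],H)`. -/
theorem semigroup_convolution_relatively_compact
    {H : Type} [NormedAddCommGroup H] [InnerProductSpace ℝ H] [CompleteSpace H]
    (T : ℝ) (hT : 0 < T)
    (S : ℝ → H →L[ℝ] H)
    (hS0 : S 0 = ContinuousLinearMap.id ℝ H)
    (hSsemigroup : ∀ s t : ℝ, 0 ≤ s → 0 ≤ t → S (s + t) = (S s).comp (S t))
    (hScont : ∀ x : H, ContinuousOn (fun t => S t x) (Set.Ici (0:ℝ)))
    (hScompact : ∀ t : ℝ, 0 < t → IsCompactOperator (S t))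
    (𝒟 : Set (ℝ → H))
    (h𝒟L1 : ∀ f ∈ 𝒟, Integrable f (volume.restrict (Set.Ioc (0:ℝ) T)))
    (h𝒟ui : ∀ ε : ℝ, 0 < ε → ∃ δ : ℝ, 0 < δ ∧ ∀ f ∈ 𝒟, ∀ I : Set ℝ,
      MeasurableSet I → I ⊆ Set.Icc 0 T → volume I ≤ ENNReal.ofReal δ →
      (∫ s in I, ‖f s‖) ≤ ε) :
    IsCompact (closure {g : C(Set.Icc (0:ℝ) T, H) |
      ∃ f ∈ 𝒟, ∀ t : Set.Icc (0:ℝ) T,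
        g t = ∫ s in Set.Ioc (0:ℝ) (t:ℝ), (S ((t:ℝ) - s)) (f s)}) := by
  obtain ⟨M, hM0, hM⟩ := exists_norm_bound T S hScont
  have hui := ui_interval h𝒟ui
  have htb := totallyBounded_values hT hM0 hSsemigroup hScont hScompact hM h𝒟L1 hui
  have hK : IsCompact (closure {x : H | ∃ f ∈ 𝒟, ∃ t ∈ Set.Icc (0:ℝ) T, conv S f t = x}) :=
    htb.closure.isCompact_of_isClosed isClosed_closure
  have heq := equicontinuous_values hT hM0 hS0 hSsemigroup hScont hM h𝒟L1 hui hK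
    (fun f hf t ht => subset_closure ⟨f, hf, t, ht, rfl⟩)
  let e := (ContinuousMap.isometryEquivBoundedOfCompact (Set.Icc (0:ℝ) T) H).toHomeomorph
  rw [← e.isCompact_image, e.image_closure]
  refine BoundedContinuousFunction.arzela_ascoli _ hK _ ?_ ?_
  · rintro _ t ⟨g, ⟨f, hf, hg⟩, rfl⟩
    exact subset_closure ⟨f, hf, t, t.2, (hg t).symm⟩
  · refine UniformEquicontinuous.equicontinuous ?_
    rw [Metric.uniformEquicontinuous_iff]
    intro ε hε
    obtain ⟨δ, hδ, h⟩ := heq ε hε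
    refine ⟨δ, hδ, ?_⟩
    rintro x y hxy ⟨_, g, ⟨f, hf, hg⟩, rfl⟩
    change dist (g x) (g y) < ε
    rw [show g x = conv S f x from hg x, show g y = conv S f y from hg y]
    rw [Subtype.dist_eq, Real.dist_eq, abs_lt] at hxy
    rcases le_total (x:ℝ) y with hle | hle
    · exact h f hf x y x.2.1 hle y.2.2 (by linarith [hxy.1])
    · rw [dist_comm]
      exact h f hf y x y.2.1 hle x.2.2 (by linarith [hxy.2])
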